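/- arXiv:1911.10505 — 7 statements merged into one kernel-verified Lean document; each statement's English description precedes it below -/
import Mathlib

section
/- Fix a flow network, a feasible flow x̄ ∈ X, a budget Γ ∈ ℕ, and an attack μ : E → {0,1} with μ_{e_ts} = 0 and Σ_{e∈E} μ_e ≤ Γ. Consider the problem of maximizing y_{e_ts} − Σ_{e∈E} p_e z_e over y, z, π : E → ℝ subject to: y_e ≥ 0 and z_e ≥ 0 for every e; Σ_{e entering v} y_e ≥ Σ_{e leaving v} y_e for every node v ≠ s; y_e ≤ (1 − μ_e) U_e for every e; y_e ≤ (1 − π_e) x̄_e + π_e U_e for every e; π_e ≤ Σ_{e' ∈ ρ_e} μ_{e'} for every e; and z_e ≥ y_e − x̄_e for every e. Then the supremum of the objective subject additionally to π_e ∈ {0,1} for every e is equal to the supremum of the objective subject additionally to 0 ≤ π_e ≤ 1 for every e. -/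
attribute [local instance] Classical.propDecidable

/-- A flow network: a finite directed graph with node set `V`, edge set `E ⊆ V × V`,
source `s`, terminal `t` with `s ≠ t`, an artificial edge `(t, s) ∈ E`, nonnegative
capacities `U` and nonnegative unit routing costs `p` with `p (t, s) = 0`. -/
structure FlowNetwork where
  V : Type
  fintypeV : Fintype V
  E : Finset (V × V)
  s : V
  t : V
  s_ne_t : s ≠ t
  ts_mem : (t, s) ∈ E
  U : V × V → ℝ
  U_nonneg : ∀ e, 0 ≤ U e
  p : V × V → ℝ
  p_nonneg : ∀ e, 0 ≤ p e
  p_ts : p (t, s) = 0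

attribute [instance] FlowNetwork.fintypeV

namespace FlowNetwork

variable (N : FlowNetwork)

/-- Sum of a function over the edges entering node `v`. -/
noncomputable def inSum (y : N.V × N.V → ℝ) (v : N.V) : ℝ :=
  ∑ e ∈ N.E.filter (fun e => e.2 = v), y e

/-- Sum of a function over the edges leaving node `v`. -/
noncomputable def outSum (y : N.V × N.V → ℝ) (v : N.V) : ℝ :=
  ∑ e ∈ N.E.filter (fun e => e.1 = v), y e

/-- A feasible flow: nonnegative, conserved at every node other than `s`,
and capacity-feasible on every edge other than the artificial edge `(t, s)`. -/
def Feasible (x : N.V × N.V → ℝ) : Prop :=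
  (∀ e, 0 ≤ x e) ∧
  (∀ v, v ≠ N.s → N.inSum x v = N.outSum x v) ∧
  (∀ e ∈ N.E, e ≠ (N.t, N.s) → x e ≤ N.U e)

/-- `Λ_u`: the set of edges lying on some simple directed path from `u` to `t`. -/
def lambdaSet (u : N.V) : Set (N.V × N.V) :=
  {e | ∃ l : List N.V, l.Chain' (fun a b => (a, b) ∈ N.E) ∧ l.Nodup ∧
    l.head? = some u ∧ l.getLast? = some N.t ∧ e ∈ l.zip l.tail}

/-- `ρ_e`: the set of edges `e' = (u, v) ∈ E` such that `e ∈ Λ_u`. -/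
def rho (e : N.V × N.V) : Set (N.V × N.V) :=
  {e' | e' ∈ N.E ∧ e ∈ N.lambdaSet e'.1}

/-- The adversary's inner LP: the supremum of the objective over feasible `(y, z, π)`
with `π` binary equals the supremum with `π` relaxed to `[0, 1]`. -/
theorem binary_pi_relaxation (N : FlowNetwork) (xb : N.V × N.V → ℝ)
    (hxb : N.Feasible xb) (Γ : ℕ) (μ : N.V × N.V → ℝ)
    (hμ01 : ∀ e, μ e = 0 ∨ μ e = 1) (hμts : μ (N.t, N.s) = 0)
    (hμbud : ∑ e ∈ N.E, μ e ≤ (Γ : ℝ)) :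
    sSup {r : ℝ | ∃ y z π : N.V × N.V → ℝ,
      (∀ e ∈ N.E, 0 ≤ y e) ∧ (∀ e ∈ N.E, 0 ≤ z e) ∧
      (∀ v, v ≠ N.s → N.outSum y v ≤ N.inSum y v) ∧
      (∀ e ∈ N.E, y e ≤ (1 - μ e) * N.U e) ∧
      (∀ e ∈ N.E, y e ≤ (1 - π e) * xb e + π e * N.U e) ∧
      (∀ e ∈ N.E, π e ≤ ∑ e' ∈ N.E.filter (fun e' => e' ∈ N.rho e), μ e') ∧
      (∀ e ∈ N.E, y e - xb e ≤ z e) ∧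
      (∀ e ∈ N.E, π e = 0 ∨ π e = 1) ∧
      r = y (N.t, N.s) - ∑ e ∈ N.E, N.p e * z e} =
    sSup {r : ℝ | ∃ y z π : N.V × N.V → ℝ,
      (∀ e ∈ N.E, 0 ≤ y e) ∧ (∀ e ∈ N.E, 0 ≤ z e) ∧
      (∀ v, v ≠ N.s → N.outSum y v ≤ N.inSum y v) ∧
      (∀ e ∈ N.E, y e ≤ (1 - μ e) * N.U e) ∧
      (∀ e ∈ N.E, y e ≤ (1 - π e) * xb e + π e * N.U e) ∧
      (∀ e ∈ N.E, π e ≤ ∑ e' ∈ N.E.filter (fun e' => e' ∈ N.rho e), μ e') ∧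
      (∀ e ∈ N.E, y e - xb e ≤ z e) ∧
      (∀ e ∈ N.E, 0 ≤ π e ∧ π e ≤ 1) ∧
      r = y (N.t, N.s) - ∑ e ∈ N.E, N.p e * z e} := by
  congr 1
  ext r
  constructor
  · rintro ⟨y, z, π, h1, h2, h3, h4, h5, h6, h7, h8, h9⟩
    refine ⟨y, z, π, h1, h2, h3, h4, h5, h6, h7, ?_, h9⟩
    intro e he
    rcases h8 e he with h | h <;> rw [h] <;> norm_num
  · rintro ⟨y, z, π, h1, h2, h3, h4, h5, h6, h7, h8, h9⟩
    have hμ0 : ∀ e, 0 ≤ μ e := fun e => by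
      rcases hμ01 e with h | h <;> rw [h] <;> norm_num
    refine ⟨y, z, fun e => if 0 < π e ∧ xb e ≤ N.U e then 1 else 0,
      h1, h2, h3, h4, ?_, ?_, h7, ?_, h9⟩
    · intro e he
      have h5e := h5 e he
      obtain ⟨ha, hb⟩ := h8 e he
      dsimp only
      split_ifs with hc
      · nlinarith [hc.1, hc.2]
      · rcases ha.eq_or_lt with h0 | h0
        · rw [← h0] at h5e
          linarith
        · have : N.U e < xb e := by
            by_contra hcon
            exact hc ⟨h0, not_lt.mp hcon⟩
          nlinarith
    · intro e he
      dsimp only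
      split_ifs with hc
      · have hpos := lt_of_lt_of_le hc.1 (h6 e he)
        obtain ⟨e', he', hlt⟩ := Finset.exists_lt_of_sum_lt
          (f := fun _ => (0 : ℝ)) (by simpa using hpos)
        have h1' : μ e' = 1 := by
          rcases hμ01 e' with h | h
          · rw [h] at hlt
            exact absurd hlt (lt_irrefl _)
          · exact h
        rw [← h1']
        exact Finset.single_le_sum (f := μ) (fun i _ => hμ0 i) he'
      · exact Finset.sum_nonneg fun i _ => hμ0 i
    · intro e he
      dsimp only
      split_ifs
      · exact Or.inr rfl
      · exact Or.inl rfl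

end FlowNetwork
end

section
/- The adversary's decision problem is not sub-modular: there exist a flow network with p_e = 0 for every e, a feasible flow x̄ ∈ X, attack sets A ⊆ B ⊆ E \ {e_ts}, and an edge e* ∈ E \ (B ∪ {e_ts}) such that the marginal gain of adding e* to A is strictly smaller than the marginal gain of adding e* to B, i.e. g(A ∪ {e*}) − g(A) < g(B ∪ {e*}) − g(B). -/
attribute [local instance] Classical.propDecidable

namespace FlowNetwork

variable (N : FlowNetwork)

/-- The indicator `π_e` induced by an attack set `A`: `1` if some edge of `A` lies in
`ρ_e`, and `0` otherwise. -/
noncomputable def piOf (A : Finset (N.V × N.V)) (e : N.V × N.V) : ℝ :=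
  if ∃ e' ∈ A, e' ∈ N.rho e then 1 else 0

/-- The set of objective values of feasible points of the LP defining `G(A)` for a
given feasible flow `xb` and attack set `A`. -/
def GSet (xb : N.V × N.V → ℝ) (A : Finset (N.V × N.V)) : Set ℝ :=
  {r | ∃ y z : N.V × N.V → ℝ,
    (∀ e ∈ N.E, 0 ≤ y e) ∧ (∀ e ∈ N.E, 0 ≤ z e) ∧
    (∀ v, v ≠ N.s → N.outSum y v ≤ N.inSum y v) ∧
    (∀ e ∈ A, y e ≤ 0) ∧
    (∀ e ∈ N.E, e ∉ A → y e ≤ (1 - N.piOf A e) * xb e + N.piOf A e * N.U e) ∧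
    (∀ e ∈ N.E, y e - xb e ≤ z e) ∧
    r = y (N.t, N.s) - ∑ e ∈ N.E, N.p e * z e}

/-- `G(A)`: the optimal adaptive value after the attack set `A`. -/
noncomputable def GVal (xb : N.V × N.V → ℝ) (A : Finset (N.V × N.V)) : ℝ :=
  sSup (N.GSet xb A)

/-- `g(A) = G(∅) − G(A)`: the adversary's gain from the attack set `A`. -/
noncomputable def gain (xb : N.V × N.V → ℝ) (A : Finset (N.V × N.V)) : ℝ :=
  N.GVal xb ∅ - N.GVal xb A

/-- Three nodes `0 = s`, `1`, `2 = t`, edges `s → t`, `s → 1 → t` and the artificial one. -/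
noncomputable abbrev exNet : FlowNetwork where
  V := Fin 3
  fintypeV := inferInstance
  E := {((2 : Fin 3), (0 : Fin 3)), (0, 2), (0, 1), (1, 2)}
  s := (0 : Fin 3)
  t := (2 : Fin 3)
  s_ne_t := by decide
  ts_mem := by simp
  U := fun _ => 1
  U_nonneg := fun _ => zero_le_one
  p := fun _ => 0
  p_nonneg := fun _ => le_rfl
  p_ts := rfl

/-- The flow sending one unit along `s → t`. -/
noncomputable def exX : Fin 3 × Fin 3 → ℝ := fun e =>
  if e = (2, 0) ∨ e = (0, 2) then 1 else 0

/-- The flow sending one unit along `s → 1 → t`. -/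
noncomputable def exY : Fin 3 × Fin 3 → ℝ := fun e =>
  if e = (0, 2) then 0 else 1

theorem ex_mem (e : Fin 3 × Fin 3) :
    e ∈ exNet.E ↔ e = (2, 0) ∨ e = (0, 2) ∨ e = (0, 1) ∨ e = (1, 2) := by
  change e ∈ ({((2 : Fin 3), (0 : Fin 3)), (0, 2), (0, 1), (1, 2)} : Finset (Fin 3 × Fin 3)) ↔ _
  simp

theorem ex_sum (f : Fin 3 × Fin 3 → ℝ) :
    (∑ e ∈ exNet.E, f e) = f (2, 0) + f (0, 2) + f (0, 1) + f (1, 2) := by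
  change (∑ e ∈ ({((2 : Fin 3), (0 : Fin 3)), (0, 2), (0, 1), (1, 2)} :
    Finset (Fin 3 × Fin 3)), f e) = _
  rw [Finset.sum_insert (by simp), Finset.sum_insert (by simp), Finset.sum_insert (by simp),
    Finset.sum_singleton]
  ring

theorem ex_in (y : Fin 3 × Fin 3 → ℝ) (v : Fin 3) :
    exNet.inSum y v = (if (0 : Fin 3) = v then y (2, 0) else 0) +
      (if (2 : Fin 3) = v then y (0, 2) else 0) + (if (1 : Fin 3) = v then y (0, 1) else 0) +
      (if (2 : Fin 3) = v then y (1, 2) else 0) := by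
  unfold inSum
  rw [Finset.sum_filter]
  refine Eq.trans (Finset.sum_congr rfl ?_) (ex_sum (fun e => if e.2 = v then y e else 0))
  intro e _
  congr

theorem ex_out (y : Fin 3 × Fin 3 → ℝ) (v : Fin 3) :
    exNet.outSum y v = (if (2 : Fin 3) = v then y (2, 0) else 0) +
      (if (0 : Fin 3) = v then y (0, 2) else 0) + (if (0 : Fin 3) = v then y (0, 1) else 0) +
      (if (1 : Fin 3) = v then y (1, 2) else 0) := by
  unfold outSum
  rw [Finset.sum_filter]
  refine Eq.trans (Finset.sum_congr rfl ?_) (ex_sum (fun e => if e.1 = v then y e else 0))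
  intro e _
  congr

theorem ex_pi (A : Finset (Fin 3 × Fin 3)) (e : Fin 3 × Fin 3) :
    exNet.piOf A e = 0 ∨ exNet.piOf A e = 1 := by
  unfold piOf
  split_ifs
  · exact Or.inr rfl
  · exact Or.inl rfl

theorem ex_le_one (A : Finset (Fin 3 × Fin 3)) (hA : ((2 : Fin 3), (0 : Fin 3)) ∉ A) (r : ℝ)
    (hr : r ∈ exNet.GSet exX A) : r ≤ 1 := by
  obtain ⟨y, z, -, -, -, -, h, -, rfl⟩ := hr
  have h1 := h ((2 : Fin 3), (0 : Fin 3)) ((ex_mem _).2 (Or.inl rfl)) hA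
  have h2 : exX (2, 0) = 1 := by simp [exX]
  have h3 : exNet.U ((2 : Fin 3), (0 : Fin 3)) = 1 := rfl
  rw [h2, h3] at h1
  have h4 : (∑ e ∈ exNet.E, exNet.p e * z e) = 0 :=
    Finset.sum_eq_zero (fun e _ => zero_mul _)
  rw [h4]
  have h5 : y (exNet.t, exNet.s) = y ((2 : Fin 3), (0 : Fin 3)) := rfl
  rw [h5]
  linarith

theorem ex_bdd (A : Finset (Fin 3 × Fin 3)) (hA : ((2 : Fin 3), (0 : Fin 3)) ∉ A) :
    BddAbove (exNet.GSet exX A) := ⟨1, fun r hr => ex_le_one A hA r hr⟩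

theorem ex_zero_le (A : Finset (Fin 3 × Fin 3)) (r : ℝ) (y : Fin 3 × Fin 3 → ℝ)
    (hr : r = y (2, 0)) (h0 : ∀ e, 0 ≤ y e) (hA : ∀ e ∈ A, y e ≤ 0)
    (h1 : y (0, 1) = y (1, 2)) (h2 : y (2, 0) = y (0, 2) + y (1, 2))
    (hc : ∀ e, e ∈ exNet.E → e ∉ A →
      y e ≤ (1 - exNet.piOf A e) * exX e + exNet.piOf A e * 1) :
    r ∈ exNet.GSet exX A := by
  refine ⟨y, fun e => max 0 (y e - exX e), fun e _ => h0 e, fun e _ => le_max_left _ _, ?_, hA,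
    hc, fun e _ => le_max_right _ _, ?_⟩
  · intro v hv
    rw [ex_in, ex_out]
    change Fin 3 at v
    change v ≠ (0 : Fin 3) at hv
    fin_cases v
    · exact absurd rfl hv
    · simp [h1]
    · simp [h2]
  · have h4 : (∑ e ∈ exNet.E, exNet.p e * (fun e => max 0 (y e - exX e)) e) = 0 :=
      Finset.sum_eq_zero (fun e _ => zero_mul _)
    rw [h4, sub_zero]
    exact hr

theorem exX_nonneg (e : Fin 3 × Fin 3) : 0 ≤ exX e := by
  unfold exX; split_ifs <;> norm_num

theorem exX_le (e : Fin 3 × Fin 3) : exX e ≤ 1 := by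
  unfold exX; split_ifs <;> norm_num

theorem ex_mem_X (A : Finset (Fin 3 × Fin 3)) (hA : ∀ e ∈ A, exX e ≤ 0) :
    (1 : ℝ) ∈ exNet.GSet exX A := by
  refine ex_zero_le A 1 exX (by simp [exX]) exX_nonneg hA (by simp [exX]) (by simp [exX]) ?_
  intro e _ _
  have := exX_le e
  rcases ex_pi A e with h | h <;> rw [h] <;> linarith

theorem ex_pi_one (e : Fin 3 × Fin 3) (he : e = (0, 1) ∨ e = (1, 2)) :
    exNet.piOf {((0 : Fin 3), (2 : Fin 3))} e = 1 := by
  unfold piOf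
  apply if_pos
  refine ⟨((0 : Fin 3), (2 : Fin 3)), Finset.mem_singleton_self _, (ex_mem _).2 (by simp), ?_⟩
  refine ⟨[(0 : Fin 3), (1 : Fin 3), (2 : Fin 3)], ?_, ?_, rfl, rfl, ?_⟩
  · refine List.IsChain.cons_cons ((ex_mem _).2 (by simp))
      (List.IsChain.cons_cons ((ex_mem _).2 (by simp)) (List.IsChain.singleton _))
  · change ([0, 1, 2] : List (Fin 3)).Nodup
    decide
  · change e ∈ ([(0, 1), (1, 2)] : List (Fin 3 × Fin 3))
    simpa using he

theorem ex_mem_Y : (1 : ℝ) ∈ exNet.GSet exX {((0 : Fin 3), (2 : Fin 3))} := by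
  refine ex_zero_le _ 1 exY (by simp [exY]) ?_ ?_ (by simp [exY]) (by simp [exY]) ?_
  · intro e
    unfold exY; split_ifs <;> norm_num
  · intro e he
    rw [Finset.mem_singleton] at he
    subst he
    simp [exY]
  · intro e he hA
    have hY : exY e ≤ 1 := by unfold exY; split_ifs <;> norm_num
    rcases (ex_mem e).1 he with h | h | h | h
    · have hx : exX e = 1 := by subst h; simp [exX]
      rw [hx]; linarith
    · exact absurd (Finset.mem_singleton.2 h) hA
    · rw [ex_pi_one e (Or.inl h)]; linarith
    · rw [ex_pi_one e (Or.inr h)]; linarith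

theorem ex_both (A : Finset (Fin 3 × Fin 3)) (h1 : ((0 : Fin 3), (2 : Fin 3)) ∈ A)
    (h2 : ((1 : Fin 3), (2 : Fin 3)) ∈ A) : exNet.GVal exX A ≤ 0 := by
  apply Real.sSup_nonpos
  rintro r ⟨y, z, -, -, h, hA, -, -, rfl⟩
  have h4 : (∑ e ∈ exNet.E, exNet.p e * z e) = 0 :=
    Finset.sum_eq_zero (fun e _ => zero_mul _)
  rw [h4]
  have h5 : y (exNet.t, exNet.s) = y ((2 : Fin 3), (0 : Fin 3)) := rfl
  rw [h5]
  have h6 := h (2 : Fin 3) (by change (2 : Fin 3) ≠ 0; decide)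
  rw [ex_in, ex_out] at h6
  have h7 := hA _ h1
  have h8 := hA _ h2
  simp at h6
  linarith

theorem ex_feasible : exNet.Feasible exX := by
  refine ⟨exX_nonneg, ?_, fun e _ _ => exX_le e⟩
  intro v hv
  rw [ex_in, ex_out]
  change Fin 3 at v
  change v ≠ (0 : Fin 3) at hv
  fin_cases v
  · exact absurd rfl hv
  · simp [exX]
  · simp [exX]

/-- The adversary's decision problem is not sub-modular. -/
theorem adversary_not_submodular :
    ∃ (N : FlowNetwork) (xb : N.V × N.V → ℝ) (A B : Finset (N.V × N.V))
      (estar : N.V × N.V),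
      (∀ e, N.p e = 0) ∧ N.Feasible xb ∧
      A ⊆ B ∧ B ⊆ N.E ∧ (N.t, N.s) ∉ B ∧
      estar ∈ N.E ∧ estar ∉ B ∧ estar ≠ (N.t, N.s) ∧
      N.gain xb (insert estar A) - N.gain xb A <
        N.gain xb (insert estar B) - N.gain xb B := by
  refine ⟨exNet, exX, ∅, {((0 : Fin 3), (2 : Fin 3))}, ((1 : Fin 3), (2 : Fin 3)),
    fun _ => rfl, ex_feasible, Finset.empty_subset _, ?_, ?_, (ex_mem _).2 (by simp), ?_, ?_, ?_⟩
  · intro e he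
    rw [Finset.mem_singleton] at he
    exact (ex_mem e).2 (Or.inr (Or.inl he))
  · intro h
    have h' : ((2 : Fin 3), (0 : Fin 3)) = (0, 2) := Finset.mem_singleton.1 h
    exact absurd h' (by decide)
  · intro h
    have h' : ((1 : Fin 3), (2 : Fin 3)) = (0, 2) := Finset.mem_singleton.1 h
    exact absurd h' (by decide)
  · intro h
    have h' : ((1 : Fin 3), (2 : Fin 3)) = (2, 0) := h
    exact absurd h' (by decide)
  · unfold gain
    have a1 : exNet.GVal exX ∅ ≤ 1 :=
      Real.sSup_le (fun r hr => ex_le_one ∅ (Finset.notMem_empty _) r hr) zero_le_one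
    have a2 : ∀ S : Finset (exNet.V × exNet.V),
        (∀ e, e ∈ S → e = ((1 : Fin 3), (2 : Fin 3))) → 1 ≤ exNet.GVal exX S := by
      intro S hS
      refine le_csSup (ex_bdd _ ?_) (ex_mem_X _ ?_)
      · intro h
        have h' : ((2 : Fin 3), (0 : Fin 3)) = (1, 2) := hS _ h
        exact absurd h' (by decide)
      · intro e he
        have h' : e = ((1 : Fin 3), (2 : Fin 3)) := hS _ he
        rw [h']
        simp [exX]
    have a3 : 1 ≤ exNet.GVal exX {((0 : Fin 3), (2 : Fin 3))} := by
      refine le_csSup (ex_bdd _ ?_) ex_mem_Y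
      intro h
      exact absurd (Finset.mem_singleton.1 h) (by decide)
    have key : ∀ a b c d : ℝ, a ≤ 1 → 1 ≤ b → 1 ≤ c → d ≤ 0 →
        (a - b) - (a - a) < (a - d) - (a - c) := by
      intro a b c d _ _ _ _
      linarith
    refine key _ _ _ _ a1 (a2 _ ?_) a3 (ex_both _ ?_ ?_)
    · exact fun e he =>
        ((@Finset.mem_insert _ (_) _ _ _).1 he).elim id (fun h => absurd h (Finset.notMem_empty _))
    · exact (@Finset.mem_insert _ (_) _ _ _).2 (Or.inr (Finset.mem_singleton_self _))
    · exact (@Finset.mem_insert _ (_) _ _ _).2 (Or.inl rfl)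

end FlowNetwork
end

section
/- The adversary's decision problem is not super-modular: there exist a flow network with p_e = 0 for every e, a feasible flow x̄ ∈ X, attack sets A ⊆ B ⊆ E \ {e_ts}, and an edge e* ∈ E \ (B ∪ {e_ts}) such that the marginal gain of adding e* to A is strictly larger than the marginal gain of adding e* to B, i.e. g(A ∪ {e*}) − g(A) > g(B ∪ {e*}) − g(B). -/
attribute [local instance] Classical.propDecidable

namespace FlowNetwork

variable (N : FlowNetwork)

theorem mem_insert_any {α : Type} (d : DecidableEq α) (a : α) (S : Finset α) :
    a ∈ @insert α (Finset α) (@Finset.instInsert α d) a S :=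
  Finset.mem_insert_self a S

/-- The path network `0 → 1 → 2` with source `0`, terminal `2`, unit capacities. -/
noncomputable abbrev pathNet : FlowNetwork where
  V := Fin 3
  fintypeV := inferInstance
  E := {((0 : Fin 3), (1 : Fin 3)), (1, 2), (2, 0)}
  s := (0 : Fin 3)
  t := (2 : Fin 3)
  s_ne_t := by decide
  ts_mem := by simp
  U := fun _ => 1
  U_nonneg := fun _ => zero_le_one
  p := fun _ => 0
  p_nonneg := fun _ => le_refl _
  p_ts := rfl

theorem pathNet_sum (f : Fin 3 × Fin 3 → ℝ) :
    ∑ e ∈ pathNet.E, f e = f (0, 1) + f (1, 2) + f (2, 0) := by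
  change ∑ e ∈ ({((0 : Fin 3), (1 : Fin 3)), (1, 2), (2, 0)} : Finset (Fin 3 × Fin 3)), f e = _
  rw [Finset.sum_insert (by simp), Finset.sum_insert (by simp), Finset.sum_singleton, add_assoc]

theorem pathNet_in (f : Fin 3 × Fin 3 → ℝ) (v : Fin 3) :
    pathNet.inSum f v = (if (1 : Fin 3) = v then f (0, 1) else 0)
      + (if (2 : Fin 3) = v then f (1, 2) else 0) + (if (0 : Fin 3) = v then f (2, 0) else 0) := by
  unfold inSum
  rw [Finset.sum_filter]
  refine (pathNet_sum _).trans ?_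
  congr

theorem pathNet_out (f : Fin 3 × Fin 3 → ℝ) (v : Fin 3) :
    pathNet.outSum f v = (if (0 : Fin 3) = v then f (0, 1) else 0)
      + (if (1 : Fin 3) = v then f (1, 2) else 0) + (if (2 : Fin 3) = v then f (2, 0) else 0) := by
  unfold outSum
  rw [Finset.sum_filter]
  refine (pathNet_sum _).trans ?_
  congr

theorem pathNet_empty : pathNet.GVal (fun _ => 1) ∅ = 1 := by
  have hpi : ∀ e, pathNet.piOf ∅ e = 0 := by intro e; simp [piOf]
  apply IsGreatest.csSup_eq
  constructor
  · refine ⟨fun _ => 1, fun _ => 0, by simp, by simp, ?_, by simp, ?_, by simp, ?_⟩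
    · intro v _
      rw [pathNet_in, pathNet_out]
      change Fin 3 at v
      fin_cases v <;> simp
    · intro e _ _; simp [hpi]
    · simp
  · rintro r ⟨y, z, -, -, -, -, h, -, rfl⟩
    have h1 := h _ pathNet.ts_mem (by simp)
    rw [hpi] at h1
    simp [pathNet] at h1 ⊢
    linarith

theorem pathNet_zero (A : Finset (pathNet.V × pathNet.V))
    (hA : (((0 : Fin 3), (1 : Fin 3)) : pathNet.V × pathNet.V) ∈ A ∨
      (((1 : Fin 3), (2 : Fin 3)) : pathNet.V × pathNet.V) ∈ A) :
    pathNet.GVal (fun _ => 1) A = 0 := by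
  apply IsGreatest.csSup_eq
  constructor
  · refine ⟨fun _ => 0, fun _ => 0, by simp, by simp, ?_, by simp, ?_, by simp, ?_⟩
    · intro v _
      rw [pathNet_in, pathNet_out]
      simp
    · intro e _ _; simp [pathNet]
    · simp
  · rintro r ⟨y, z, -, -, hc, ha, -, -, rfl⟩
    have h1 := hc (1 : Fin 3) (by change (1 : Fin 3) ≠ 0; decide)
    have h2 := hc (2 : Fin 3) (by change (2 : Fin 3) ≠ 0; decide)
    rw [pathNet_in, pathNet_out] at h1 h2
    simp at h1 h2
    have h3 : ∑ e ∈ pathNet.E, pathNet.p e * z e = 0 :=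
      Finset.sum_eq_zero (fun e _ => zero_mul _)
    rw [h3, sub_zero]
    change y ((2 : Fin 3), (0 : Fin 3)) ≤ 0
    rcases hA with hA | hA
    · have := ha _ hA
      linarith
    · have := ha _ hA
      linarith

/-- The adversary's decision problem is not super-modular. -/
theorem adversary_not_supermodular :
    ∃ (N : FlowNetwork) (xb : N.V × N.V → ℝ) (A B : Finset (N.V × N.V))
      (estar : N.V × N.V),
      (∀ e, N.p e = 0) ∧ N.Feasible xb ∧
      A ⊆ B ∧ B ⊆ N.E ∧ (N.t, N.s) ∉ B ∧
      estar ∈ N.E ∧ estar ∉ B ∧ estar ≠ (N.t, N.s) ∧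
      N.gain xb (insert estar A) - N.gain xb A >
        N.gain xb (insert estar B) - N.gain xb B := by
  refine ⟨pathNet, fun _ => 1, ∅, {((0 : Fin 3), (1 : Fin 3))}, ((1 : Fin 3), (2 : Fin 3)),
    fun _ => rfl, ⟨fun _ => zero_le_one, ?_, fun _ _ _ => le_refl _⟩, by simp, ?_, ?_, ?_, ?_, ?_, ?_⟩
  · intro v _
    rw [pathNet_in, pathNet_out]
    change Fin 3 at v
    fin_cases v <;> simp
  · intro e he
    rw [Finset.mem_singleton] at he
    subst he
    simp [pathNet]
  · rw [Finset.mem_singleton]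
    change ¬ (((2 : Fin 3), (0 : Fin 3)) = (0, 1))
    decide
  · simp [pathNet]
  · rw [Finset.mem_singleton]
    change ¬ (((1 : Fin 3), (2 : Fin 3)) = (0, 1))
    decide
  · change ¬ (((1 : Fin 3), (2 : Fin 3)) = (2, 0))
    decide
  · unfold gain
    rw [pathNet_empty, pathNet_zero, pathNet_zero, pathNet_zero]
    · norm_num
    · exact Or.inl (Finset.mem_singleton_self _)
    · exact Or.inr (mem_insert_any _ _ _)
    · exact Or.inr (mem_insert_any _ _ _)

end FlowNetwork
end

section
/- For every flow network, every feasible flow x ∈ X, and every attack μ that attacks exactly one edge e* ≠ e_ts (μ_{e*} = 1 and μ_e = 0 for all e ≠ e*), the loss in the administrator's objective is bounded by the flow initially assigned to the attacked edge: M(x, μ) ≥ M(x, 0) − x_{e*}, where 0 denotes the attack with no attacked edges. -/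
attribute [local instance] Classical.propDecidable

namespace FlowNetwork

variable (N : FlowNetwork)

/-- `σ_μ`: the set of tails of the edges attacked by `μ`. -/
def sigmaSet (μ : N.V × N.V → ℝ) : Set N.V :=
  {u | ∃ w, (u, w) ∈ N.E ∧ μ (u, w) = 1}

/-- `Λ_{σ_μ}`: the union of `Λ_u` over all tails `u` of attacked edges. -/
def lambdaSigma (μ : N.V × N.V → ℝ) : Set (N.V × N.V) :=
  ⋃ u ∈ N.sigmaSet μ, N.lambdaSet u

/-- The set of objective values of feasible points of the LP defining `M(x, μ)`. -/
def MSet (x μ : N.V × N.V → ℝ) : Set ℝ :=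
  {r | ∃ y z : N.V × N.V → ℝ,
    (∀ e ∈ N.E, 0 ≤ y e) ∧ (∀ e ∈ N.E, 0 ≤ z e) ∧
    (∀ v, v ≠ N.s → N.outSum y v ≤ N.inSum y v) ∧
    (∀ e ∈ N.E, e ∉ N.lambdaSigma μ → y e ≤ x e) ∧
    (∀ e ∈ N.E, e ∈ N.lambdaSigma μ → y e ≤ (1 - μ e) * N.U e) ∧
    (∀ e ∈ N.E, e ∈ N.lambdaSigma μ → y e - x e ≤ z e) ∧
    r = y (N.t, N.s) - ∑ e ∈ N.E, N.p e * z e - ∑ e ∈ N.E, N.p e * x e}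

/-- `M(x, μ)`: the adaptive value of the flow `x` under the attack `μ`. -/
noncomputable def MVal (x μ : N.V × N.V → ℝ) : ℝ := sSup (N.MSet x μ)

lemma ts_not_zip {V : Type} (t s : V) : ∀ l : List V, l.Nodup → l.getLast? = some t →
    (t, s) ∉ l.zip l.tail
  | [], _, _ => by simp
  | [a], _, _ => by simp
  | a :: b :: l, hn, hl => by
    intro h
    rw [List.getLast?_cons_cons] at hl
    have hn' := List.nodup_cons.1 hn
    simp only [List.tail_cons, List.zip_cons_cons, List.mem_cons, Prod.mk.injEq] at h
    rcases h with ⟨h1, _⟩ | h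
    · exact hn'.1 (h1 ▸ List.mem_of_getLast? hl)
    · exact ts_not_zip t s (b :: l) hn'.2 hl (by simpa using h)

lemma ts_not_lambdaSigma (N : FlowNetwork) (μ : N.V × N.V → ℝ) :
    (N.t, N.s) ∉ N.lambdaSigma μ := by
  intro h
  simp only [lambdaSigma, Set.mem_iUnion] at h
  obtain ⟨u, _, l, _, hn, _, hl, hz⟩ := h
  exact ts_not_zip _ _ l hn hl hz

lemma MSet_le (N : FlowNetwork) (x μ : N.V × N.V → ℝ) {r : ℝ} (hr : r ∈ N.MSet x μ) :
    r ≤ x (N.t, N.s) - ∑ e ∈ N.E, N.p e * x e := by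
  obtain ⟨y, z, _, hz, _, h1, _, _, rfl⟩ := hr
  have := h1 _ N.ts_mem (ts_not_lambdaSigma N μ)
  have h2 : 0 ≤ ∑ e ∈ N.E, N.p e * z e :=
    Finset.sum_nonneg fun e he => mul_nonneg (N.p_nonneg e) (hz e he)
  linarith

lemma sum_inSum (N : FlowNetwork) (y : N.V × N.V → ℝ) : ∑ v, N.inSum y v = ∑ e ∈ N.E, y e := by
  unfold inSum
  exact Finset.sum_fiberwise _ _ _

lemma sum_outSum (N : FlowNetwork) (y : N.V × N.V → ℝ) :
    ∑ v, N.outSum y v = ∑ e ∈ N.E, y e := by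
  unfold outSum
  exact Finset.sum_fiberwise _ _ _

lemma inSum_mono (N : FlowNetwork) {y y' : N.V × N.V → ℝ} (h : ∀ e, y e ≤ y' e) (v : N.V) :
    N.inSum y v ≤ N.inSum y' v := Finset.sum_le_sum fun e _ => h e

lemma outSum_mono (N : FlowNetwork) {y y' : N.V × N.V → ℝ} (h : ∀ e, y e ≤ y' e) (v : N.V) :
    N.outSum y v ≤ N.outSum y' v := Finset.sum_le_sum fun e _ => h e

lemma inSum_nonneg (N : FlowNetwork) {y : N.V × N.V → ℝ} (h : ∀ e, 0 ≤ y e) (v : N.V) :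
    0 ≤ N.inSum y v := Finset.sum_nonneg fun e _ => h e

lemma outSum_scale (N : FlowNetwork) (x : N.V × N.V → ℝ) (g : N.V → ℝ) (v : N.V) :
    N.outSum (fun e => x e * g e.1) v = N.outSum x v * g v := by
  unfold outSum
  rw [Finset.sum_mul]
  refine Finset.sum_congr rfl fun e he => ?_
  have h := (Finset.mem_filter.1 he).2
  dsimp only
  rw [h]

/-- Conservation at the source follows from conservation elsewhere. -/
lemma conserve_s (N : FlowNetwork) (x : N.V × N.V → ℝ)
    (h : ∀ v, v ≠ N.s → N.inSum x v = N.outSum x v) : N.inSum x N.s = N.outSum x N.s := by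
  have h1 := (sum_inSum N x).trans (sum_outSum N x).symm
  rw [← Finset.add_sum_erase _ _ (Finset.mem_univ N.s),
    ← Finset.add_sum_erase _ (fun v => N.outSum x v) (Finset.mem_univ N.s),
    Finset.sum_congr rfl fun v hv => h v (Finset.ne_of_mem_erase hv)] at h1
  linarith

/-- The flow surviving when node `v` only transmits the fraction `g v`, with edge `a` removed. -/
noncomputable def surv (N : FlowNetwork) (x : N.V × N.V → ℝ) (a : N.V × N.V) (g : N.V → ℝ) :
    N.V × N.V → ℝ := fun e => if e = a then 0 else x e * g e.1

lemma exists_fraction (N : FlowNetwork) (x : N.V × N.V → ℝ) (hx : N.Feasible x)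
    (a : N.V × N.V) : ∃ g : N.V → ℝ, (∀ v, 0 ≤ g v) ∧ (∀ v, g v ≤ 1) ∧ g N.s = 1 ∧
      ∀ v, v ≠ N.s → N.inSum (surv N x a g) v = N.outSum x v * g v := by
  obtain ⟨h0, hc, _⟩ := hx
  have hs0 : ∀ g : N.V → unitInterval, ∀ e, 0 ≤ surv N x a (fun v => (g v : ℝ)) e := by
    intro g e
    unfold surv
    split_ifs
    · exact le_rfl
    · exact mul_nonneg (h0 e) (g _).2.1
  have hs1 : ∀ g : N.V → unitInterval, ∀ e, surv N x a (fun v => (g v : ℝ)) e ≤ x e := by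
    intro g e
    unfold surv
    split_ifs
    · exact h0 e
    · exact mul_le_of_le_one_right (h0 e) (g _).2.2
  have ho0 : ∀ v, 0 ≤ N.outSum x v := fun v => Finset.sum_nonneg fun e _ => h0 e
  let F : (N.V → unitInterval) →o (N.V → unitInterval) :=
    { toFun := fun g v => if hv : v = N.s then 1 else
        ⟨N.inSum (surv N x a (fun v => (g v : ℝ))) v / N.outSum x v,
          div_nonneg (inSum_nonneg N (hs0 g) v) (ho0 v),
          div_le_one_of_le₀ ((inSum_mono N (hs1 g) v).trans (hc v hv).le) (ho0 v)⟩
      monotone' := by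
        intro g g' hg v
        dsimp only
        split_ifs with hv
        · exact le_rfl
        · refine Subtype.mk_le_mk.2 (div_le_div_of_nonneg_right (inSum_mono N ?_ v) (ho0 v))
          intro e
          unfold surv
          split_ifs
          · exact le_rfl
          · exact mul_le_mul_of_nonneg_left (hg e.1) (h0 e) }
  have hfix : F F.lfp = F.lfp := F.map_lfp
  generalize F.lfp = g at hfix
  refine ⟨fun v => (g v : ℝ), fun v => (g v).2.1, fun v => (g v).2.2, ?_, ?_⟩
  · have h1 : F g N.s = 1 := dif_pos rfl
    have h2 : g N.s = 1 := (congrFun hfix N.s).symm.trans h1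
    simp [h2]
  · intro v hv
    have h1 : F g v = ⟨N.inSum (surv N x a (fun v => (g v : ℝ))) v / N.outSum x v, _⟩ :=
      dif_neg hv
    have h2 : (g v : ℝ) = N.inSum (surv N x a (fun v => (g v : ℝ))) v / N.outSum x v :=
      congrArg Subtype.val ((congrFun hfix v).symm.trans h1)
    show N.inSum (surv N x a (fun v => (g v : ℝ))) v = N.outSum x v * (g v : ℝ)
    by_cases ho : N.outSum x v = 0
    · rw [ho, zero_mul]
      refine le_antisymm ?_ (inSum_nonneg N (hs0 g) v)
      exact (inSum_mono N (hs1 g) v).trans ((hc v hv).le.trans ho.le)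
    · rw [h2, mul_div_cancel₀ _ ho]

lemma exists_flow (N : FlowNetwork) (x : N.V × N.V → ℝ) (hx : N.Feasible x)
    (a : N.V × N.V) (ha : a ∈ N.E) : ∃ y : N.V × N.V → ℝ,
      (∀ e, 0 ≤ y e) ∧ (∀ e, y e ≤ x e) ∧ y a = 0 ∧
      (∀ v, v ≠ N.s → N.outSum y v ≤ N.inSum y v) ∧
      x (N.t, N.s) - x a ≤ y (N.t, N.s) := by
  obtain ⟨g, g0, g1, gs, hg⟩ := exists_fraction N x hx a
  obtain ⟨h0, hc, _⟩ := hx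
  have hsle : ∀ e, surv N x a g e ≤ x e * g e.1 := by
    intro e
    unfold surv
    split_ifs
    · exact mul_nonneg (h0 e) (g0 _)
    · exact le_rfl
  refine ⟨surv N x a g, ?_, fun e => (hsle e).trans (mul_le_of_le_one_right (h0 e) (g1 _)),
    by simp [surv], ?_, ?_⟩
  · intro e
    unfold surv
    split_ifs
    · exact le_rfl
    · exact mul_nonneg (h0 e) (g0 _)
  · intro v hv
    rw [hg v hv, ← outSum_scale]
    exact outSum_mono N hsle v
  · -- total balance
    have e1 := sum_inSum N (surv N x a g)
    have e2 := sum_outSum N (fun e => x e * g e.1)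
    rw [← Finset.add_sum_erase _ _ (Finset.mem_univ N.s)] at e1 e2
    rw [Finset.sum_congr rfl fun v hv => hg v (Finset.ne_of_mem_erase hv)] at e1
    simp only [outSum_scale, gs, mul_one] at e2
    have e3 : ∑ e ∈ N.E, surv N x a g e = ∑ e ∈ N.E, x e * g e.1 - x a * g a.1 := by
      rw [← Finset.add_sum_erase _ _ ha, ← Finset.add_sum_erase _ (fun e => x e * g e.1) ha]
      rw [Finset.sum_congr rfl fun e he => (show surv N x a g e = x e * g e.1 by
        simp [surv, Finset.ne_of_mem_erase he])]
      simp [surv]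
    have hs := conserve_s N x hc
    have e4 : N.inSum x N.s - N.inSum (surv N x a g) N.s = x a * g a.1 := by linarith
    have e5 : x a * g a.1 ≤ x a := mul_le_of_le_one_right (h0 a) (g1 _)
    have e6 : x (N.t, N.s) - surv N x a g (N.t, N.s) ≤
        N.inSum x N.s - N.inSum (surv N x a g) N.s := by
      unfold inSum
      rw [← Finset.sum_sub_distrib]
      refine Finset.single_le_sum (f := fun e => x e - surv N x a g e) (fun e _ => ?_)
        (Finset.mem_filter.2 ⟨N.ts_mem, rfl⟩)
      exact sub_nonneg.2 ((hsle e).trans (mul_le_of_le_one_right (h0 e) (g1 _)))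
    linarith

/-- Attacking a single edge `e* ≠ e_ts` loses at most the flow initially assigned to
that edge: `M(x, μ) ≥ M(x, 0) − x_{e*}`. -/
theorem single_attack_loss_le_flow (N : FlowNetwork) (x : N.V × N.V → ℝ)
    (hx : N.Feasible x) (estar : N.V × N.V) (hmem : estar ∈ N.E)
    (hne : estar ≠ (N.t, N.s)) (μ : N.V × N.V → ℝ)
    (hμ : ∀ e, μ e = if e = estar then 1 else 0) :
    N.MVal x (fun _ => 0) - x estar ≤ N.MVal x μ := by
  obtain ⟨y, y0, yx, ya, yc, yt⟩ := exists_flow N x hx estar hmem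
  have h1 : N.MVal x (fun _ => 0) ≤ x (N.t, N.s) - ∑ e ∈ N.E, N.p e * x e := by
    refine csSup_le ?_ fun r hr => MSet_le N x _ hr
    refine ⟨_, fun _ => 0, fun _ => 0, by simp, by simp, ?_, ?_, ?_, ?_, rfl⟩
    · intro v _
      simp [inSum, outSum]
    · intro e _ _
      exact hx.1 e
    · intro e _ _
      simpa using N.U_nonneg e
    · intro e _ _
      simpa using hx.1 e
  have h2 : y (N.t, N.s) - ∑ e ∈ N.E, N.p e * x e ≤ N.MVal x μ := by
    refine le_csSup ⟨_, fun r hr => MSet_le N x _ hr⟩ ?_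
    refine ⟨y, fun _ => 0, fun e _ => y0 e, by simp, yc, fun e _ _ => yx e, ?_, ?_, by simp⟩
    · intro e he hl
      rw [hμ]
      split_ifs with h
      · simp [h, ya]
      · have hts : e ≠ (N.t, N.s) := fun h' => ts_not_lambdaSigma N μ (h' ▸ hl)
        simpa using (yx e).trans (hx.2.2 e he hts)
    · intro e _ _
      simpa using yx e
  linarith

end FlowNetwork
end

section
/- Let E be a nonempty finite set, x : E → ℝ with x_e ≥ 0 for every e, and Γ ≥ 0 a real number. Then strong LP duality holds for the adversary's inner problem of the robust flow model: max { Σ_{e∈E} x_e μ_e : μ : E → ℝ, 0 ≤ μ_e ≤ 1 for every e, Σ_{e∈E} μ_e ≤ Γ } = min { Σ_{e∈E} θ_e + ζ·Γ : θ : E → ℝ, ζ ∈ ℝ, θ_e ≥ 0 for every e, ζ ≥ 0, θ_e + ζ ≥ x_e for every e }, and both optima are attained. -/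
/-- A complementary-slackness pair: threshold price and greedy fractional attack. -/
theorem exists_threshold_pair {E : Type*} [Fintype E] [Nonempty E]
    (x : E → ℝ) (hx : ∀ e, 0 ≤ x e) (Γ : ℝ) (hΓ : 0 ≤ Γ) :
    ∃ (μ : E → ℝ) (ζ : ℝ), (∀ e, 0 ≤ μ e ∧ μ e ≤ 1) ∧ ∑ e, μ e ≤ Γ ∧ 0 ≤ ζ ∧
      (∀ e, x e * μ e = max (x e - ζ) 0 + ζ * μ e) ∧ ζ * ∑ e, μ e = ζ * Γ := by
  classical
  by_cases hc : (Fintype.card E : ℝ) ≤ Γ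
  · refine ⟨fun _ => 1, 0, by simp, by simpa using hc, le_rfl, ?_, by simp⟩
    intro e
    simp [hx e]
  push Not at hc
  let S : Finset E := Finset.univ.filter
    (fun e => Γ ≤ ((Finset.univ.filter (fun f => x e ≤ x f)).card : ℝ))
  have hS : S.Nonempty := by
    obtain ⟨e, he⟩ := Finite.exists_min x
    refine ⟨e, ?_⟩
    simp only [S, Finset.mem_filter, Finset.mem_univ, true_and]
    rw [Finset.filter_true_of_mem (fun f _ => he f)]
    simpa using hc.le
  obtain ⟨e0, he0, hmax⟩ := Finset.exists_max_image S x hS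
  let A : Finset E := Finset.univ.filter (fun f => x e0 < x f)
  let B : Finset E := Finset.univ.filter (fun f => x e0 ≤ x f)
  have hB : Γ ≤ (B.card : ℝ) := by
    simpa only [S, Finset.mem_filter, Finset.mem_univ, true_and] using he0
  have hA : (A.card : ℝ) ≤ Γ := by
    rcases A.eq_empty_or_nonempty with h | h
    · simpa [h] using hΓ
    · obtain ⟨e1, he1, hmin⟩ := Finset.exists_min_image A x h
      have h1 : x e0 < x e1 := by simpa [A] using he1
      by_contra hlt
      push Not at hlt
      have hmem : e1 ∈ S := by
        simp only [S, Finset.mem_filter, Finset.mem_univ, true_and]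
        refine hlt.le.trans ?_
        exact_mod_cast Finset.card_le_card (fun f hf => by simpa using hmin f hf)
      exact absurd (hmax e1 hmem) (not_le.mpr h1)
  have hAB : (A.card : ℝ) < B.card := by
    have : A ⊂ B := by
      refine Finset.ssubset_iff_of_subset ?_ |>.mpr ⟨e0, by simp [B], by simp [A]⟩
      intro f hf
      simp only [A, B, Finset.mem_filter, Finset.mem_univ, true_and] at *
      exact hf.le
    exact_mod_cast Finset.card_lt_card this
  have hd : (0 : ℝ) < B.card - A.card := by linarith
  obtain ⟨t, ht0, ht1, ht⟩ : ∃ t : ℝ, 0 ≤ t ∧ t ≤ 1 ∧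
      (1 - t) * A.card + t * B.card = Γ := by
    refine ⟨(Γ - A.card) / (B.card - A.card), div_nonneg (by linarith) hd.le,
      (div_le_one hd).mpr (by linarith), ?_⟩
    field_simp
    ring
  let μ : E → ℝ := fun e =>
    (1 - t) * (if x e0 < x e then 1 else 0) + t * (if x e0 ≤ x e then 1 else 0)
  have hsum : ∑ e, μ e = Γ := by
    simp only [μ, Finset.sum_add_distrib, ← Finset.mul_sum, Finset.sum_boole]
    exact ht
  refine ⟨μ, x e0, ?_, hsum.le, hx e0, ?_, by rw [hsum]⟩
  · intro e
    simp only [μ]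
    split_ifs <;> constructor <;> linarith
  · intro e
    simp only [μ]
    rcases lt_trichotomy (x e0) (x e) with h | h | h
    · rw [if_pos h, if_pos h.le, max_eq_left (by linarith)]
      ring
    · simp [h]
    · rw [if_neg (by linarith), if_neg (by linarith), max_eq_right (by linarith)]
      ring

/-- Strong LP duality for the adversary's inner problem of the robust flow model:
both the primal and the dual optima are attained and equal. -/
theorem inner_problem_strong_duality {E : Type*} [Fintype E] [Nonempty E]
    (x : E → ℝ) (hx : ∀ e, 0 ≤ x e) (Γ : ℝ) (hΓ : 0 ≤ Γ) :
    ∃ (μ : E → ℝ) (θ : E → ℝ) (ζ : ℝ),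
      ((∀ e, 0 ≤ μ e ∧ μ e ≤ 1) ∧ ∑ e, μ e ≤ Γ) ∧
      ((∀ e, 0 ≤ θ e) ∧ 0 ≤ ζ ∧ ∀ e, x e ≤ θ e + ζ) ∧
      (∀ μ' : E → ℝ, (∀ e, 0 ≤ μ' e ∧ μ' e ≤ 1) → ∑ e, μ' e ≤ Γ →
        ∑ e, x e * μ' e ≤ ∑ e, x e * μ e) ∧
      (∀ (θ' : E → ℝ) (ζ' : ℝ), (∀ e, 0 ≤ θ' e) → 0 ≤ ζ' →
        (∀ e, x e ≤ θ' e + ζ') →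
        (∑ e, θ e) + ζ * Γ ≤ (∑ e, θ' e) + ζ' * Γ) ∧
      ∑ e, x e * μ e = (∑ e, θ e) + ζ * Γ := by
  obtain ⟨μ, ζ, hμ, hμs, hζ, hpt, hcs⟩ := exists_threshold_pair x hx Γ hΓ
  have weak : ∀ (m θ' : E → ℝ) (z : ℝ), (∀ e, 0 ≤ m e ∧ m e ≤ 1) → ∑ e, m e ≤ Γ →
      (∀ e, 0 ≤ θ' e) → 0 ≤ z → (∀ e, x e ≤ θ' e + z) →
      ∑ e, x e * m e ≤ (∑ e, θ' e) + z * Γ := by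
    intro m θ' z hm hms hθ hz hf
    calc ∑ e, x e * m e ≤ ∑ e, (θ' e + z * m e) := by
          refine Finset.sum_le_sum fun e _ => ?_
          have h1 := mul_le_mul_of_nonneg_right (hf e) (hm e).1
          have h2 := mul_le_mul_of_nonneg_left (hm e).2 (hθ e)
          linarith
      _ = (∑ e, θ' e) + z * ∑ e, m e := by
          rw [Finset.sum_add_distrib, Finset.mul_sum]
      _ ≤ _ := by
          have := mul_le_mul_of_nonneg_left hms hz
          linarith
  have heq : ∑ e, x e * μ e = (∑ e, max (x e - ζ) 0) + ζ * Γ := by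
    rw [← hcs, Finset.mul_sum, ← Finset.sum_add_distrib]
    exact Finset.sum_congr rfl fun e _ => hpt e
  have h0 : ∀ e, 0 ≤ max (x e - ζ) 0 := fun e => le_max_right _ _
  have h1 : ∀ e, x e ≤ max (x e - ζ) 0 + ζ := fun e => by
    linarith [le_max_left (x e - ζ) 0]
  refine ⟨μ, fun e => max (x e - ζ) 0, ζ, ⟨hμ, hμs⟩, ⟨h0, hζ, h1⟩, ?_, ?_, heq⟩
  · intro m hm hms
    rw [heq]
    exact weak m _ ζ hm hms h0 hζ h1
  · intro θ' z hθ hz hf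
    rw [← heq]
    exact weak μ θ' z hμ hμs hθ hz hf
end

section
/- Let E be a nonempty finite set, Γ ∈ ℕ, and P = { μ : E → ℝ : 0 ≤ μ_e ≤ 1 for every e, Σ_{e∈E} μ_e ≤ Γ }. Let f : (E → ℝ) → ℝ be continuous on P and concave on P. Then there exists μ* ∈ P with μ*_e ∈ {0,1} for every e such that f(μ*) = min_{μ ∈ P} f(μ). Hence, in the adversary's dual optimization problem, the binary attack variables μ can be relaxed to continuous variables in [0,1] without changing the optimal value. -/
open Classical in
/-- Rounding: any point of the polytope is dominated by a binary point. -/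
theorem round_aux {E : Type*} [Fintype E] (Γ : ℕ)
    (f : (E → ℝ) → ℝ)
    (hconc : ConcaveOn ℝ
      {μ : E → ℝ | (∀ e, 0 ≤ μ e ∧ μ e ≤ 1) ∧ ∑ e, μ e ≤ (Γ : ℝ)} f) :
    ∀ (n : ℕ) (μ : E → ℝ), (Finset.univ.filter (fun e => μ e ≠ 0 ∧ μ e ≠ 1)).card = n →
      ((∀ e, 0 ≤ μ e ∧ μ e ≤ 1) ∧ ∑ e, μ e ≤ (Γ : ℝ)) →
      ∃ ν : E → ℝ, ((∀ e, 0 ≤ ν e ∧ ν e ≤ 1) ∧ ∑ e, ν e ≤ (Γ : ℝ)) ∧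
        (∀ e, ν e = 0 ∨ ν e = 1) ∧ f ν ≤ f μ := by
  intro n
  induction n using Nat.strong_induction_on with
  | _ n ih =>
  intro μ hn hμ
  -- it suffices to find a segment with good endpoints
  have key : ∀ (d : E → ℝ) (a b : ℝ), 0 < a → 0 < b →
      (∀ t, (t = a ∨ t = -b) →
        ((∀ e, 0 ≤ μ e + t * d e ∧ μ e + t * d e ≤ 1) ∧ ∑ e, (μ e + t * d e) ≤ (Γ : ℝ)) ∧
        (∀ e, (μ e = 0 ∨ μ e = 1) → d e = 0) ∧
        ∃ e, (μ e ≠ 0 ∧ μ e ≠ 1) ∧ (μ e + t * d e = 0 ∨ μ e + t * d e = 1)) →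
      ∃ ν : E → ℝ, ((∀ e, 0 ≤ ν e ∧ ν e ≤ 1) ∧ ∑ e, ν e ≤ (Γ : ℝ)) ∧
        (∀ e, ν e = 0 ∨ ν e = 1) ∧ f ν ≤ f μ := by
    intro d a b ha hb h
    have one : ∀ t, (t = a ∨ t = -b) → f (fun e => μ e + t * d e) ≤ f μ →
        ∃ ν : E → ℝ, ((∀ e, 0 ≤ ν e ∧ ν e ≤ 1) ∧ ∑ e, ν e ≤ (Γ : ℝ)) ∧
        (∀ e, ν e = 0 ∨ ν e = 1) ∧ f ν ≤ f μ := by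
      intro t ht hf
      obtain ⟨h1, h2, e₀, h3, h4⟩ := h t ht
      obtain ⟨ν, hν, hb', hle⟩ := ih _ (by
        rw [← hn]
        apply Finset.card_lt_card
        rw [Finset.ssubset_iff_of_subset]
        · refine ⟨e₀, by simpa using h3, ?_⟩
          simp only [Finset.mem_filter, Finset.mem_univ, true_and]
          tauto
        · intro e he
          simp only [Finset.mem_filter, Finset.mem_univ, true_and] at he ⊢
          by_contra hcon
          have h5 : μ e = 0 ∨ μ e = 1 := by tauto
          rw [h2 e h5, mul_zero, add_zero] at he
          exact hcon he) (fun e => μ e + t * d e) rfl h1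
      exact ⟨ν, hν, hb', hle.trans hf⟩
    have hx := (h a (Or.inl rfl)).1
    have hy := (h (-b) (Or.inr rfl)).1
    have hseg : μ ∈ segment ℝ (fun e => μ e + a * d e) (fun e => μ e + (-b) * d e) := by
      refine ⟨b / (a + b), a / (a + b), by positivity, by positivity, by field_simp; ring, ?_⟩
      funext e
      simp only [Pi.add_apply, Pi.smul_apply, smul_eq_mul]
      field_simp
      ring
    have hmin := hconc.ge_on_segment hx hy hseg
    rcases min_le_iff.1 hmin with h6 | h6
    · exact one a (Or.inl rfl) h6
    · exact one (-b) (Or.inr rfl) h6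
  by_cases hall : ∀ e, μ e = 0 ∨ μ e = 1
  · exact ⟨μ, hμ, hall, le_rfl⟩
  push Not at hall
  obtain ⟨i, hi0, hi1⟩ := hall
  have hi0' : 0 < μ i := lt_of_le_of_ne (hμ.1 i).1 (Ne.symm hi0)
  have hi1' : μ i < 1 := lt_of_le_of_ne (hμ.1 i).2 hi1
  by_cases hother : ∀ e, e ≠ i → μ e = 0 ∨ μ e = 1
  · -- a single fractional coordinate
    have hsum : ∑ e, μ e + (1 - μ i) ≤ (Γ : ℝ) := by
      have h1 : ∑ e, μ e = μ i + ∑ e ∈ Finset.univ.erase i, μ e :=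
        (Finset.add_sum_erase _ _ (Finset.mem_univ i)).symm
      have h2 : ∑ e ∈ Finset.univ.erase i, μ e =
          ((∑ e ∈ Finset.univ.erase i, (if μ e = 1 then 1 else 0) : ℕ) : ℝ) := by
        push_cast
        apply Finset.sum_congr rfl
        intro e he
        rcases hother e (Finset.ne_of_mem_erase he) with h | h <;> simp [h]
      generalize (∑ e ∈ Finset.univ.erase i, (if μ e = 1 then 1 else 0) : ℕ) = k at h2
      have h3 : (k : ℝ) < Γ := by linarith [hμ.2]
      have h4 : ((k + 1 : ℕ) : ℝ) ≤ Γ := by exact_mod_cast h3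
      push_cast at h4
      linarith
    apply key (Pi.single i 1) (1 - μ i) (μ i) (by linarith) hi0'
    intro t ht
    have hts : t ≤ 1 - μ i := by rcases ht with h | h <;> linarith
    refine ⟨⟨?_, ?_⟩, ?_, i, ⟨hi0, hi1⟩, ?_⟩
    · intro e
      by_cases he : e = i
      · subst he
        simp only [Pi.single_eq_same]
        rcases ht with h | h <;> constructor <;> linarith
      · simpa [he] using hμ.1 e
    · rw [Finset.sum_add_distrib, ← Finset.mul_sum, Finset.sum_pi_single']
      simp only [Finset.mem_univ, if_true]
      linarith
    · intro e he
      have : e ≠ i := by rintro rfl; tauto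
      simp [this]
    · simp only [Pi.single_eq_same]
      rcases ht with h | h
      · right; linarith
      · left; linarith
  · push Not at hother
    obtain ⟨j, hji, hj0, hj1⟩ := hother
    have hj0' : 0 < μ j := lt_of_le_of_ne (hμ.1 j).1 (Ne.symm hj0)
    have hj1' : μ j < 1 := lt_of_le_of_ne (hμ.1 j).2 hj1
    have di : (Pi.single i 1 - Pi.single j 1 : E → ℝ) i = 1 := by simp [hji.symm]
    have dj : (Pi.single i 1 - Pi.single j 1 : E → ℝ) j = -1 := by simp [hji]
    have de : ∀ e, e ≠ i → e ≠ j → (Pi.single i 1 - Pi.single j 1 : E → ℝ) e = 0 := by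
      intro e h1 h2; simp [h1, h2]
    have ds : ∑ e, (Pi.single i 1 - Pi.single j 1 : E → ℝ) e = 0 := by
      simp [Finset.sum_sub_distrib]
    generalize (Pi.single i 1 - Pi.single j 1 : E → ℝ) = d at di dj de ds
    apply key d (min (1 - μ i) (μ j)) (min (μ i) (1 - μ j))
      (lt_min (by linarith) hj0') (lt_min hi0' (by linarith))
    intro t ht
    have hb : (-μ i ≤ t ∧ t ≤ 1 - μ i ∧ μ j - 1 ≤ t ∧ t ≤ μ j) ∧
        ((t = 1 - μ i ∨ t = - μ i) ∨ (t = μ j ∨ t = μ j - 1)) := by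
      grind
    obtain ⟨⟨b1, b2, b3, b4⟩, hb⟩ := hb
    refine ⟨⟨?_, ?_⟩, ?_, ?_⟩
    · intro e
      by_cases he : e = i
      · subst he; rw [di]; constructor <;> linarith
      by_cases he' : e = j
      · subst he'; rw [dj]; constructor <;> linarith
      · rw [de e he he']; simpa using hμ.1 e
    · rw [Finset.sum_add_distrib, ← Finset.mul_sum, ds]
      linarith [hμ.2]
    · intro e he
      apply de
      · rintro rfl; tauto
      · rintro rfl; tauto
    · rcases hb with hb | hb
      · refine ⟨i, ⟨hi0, hi1⟩, ?_⟩
        rw [di]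
        rcases hb with h | h
        · right; linarith
        · left; linarith
      · refine ⟨j, ⟨hj0, hj1⟩, ?_⟩
        rw [dj]
        rcases hb with h | h
        · left; linarith
        · right; linarith

/-- A function continuous and concave on the relaxed attack polytope
`P = {μ : 0 ≤ μ_e ≤ 1, Σ_e μ_e ≤ Γ}` attains its minimum over `P` at a binary
point; hence the binary attack variables can be relaxed without changing the
optimal value. -/
theorem concave_min_at_binary_point {E : Type*} [Fintype E] [Nonempty E] (Γ : ℕ)
    (f : (E → ℝ) → ℝ)
    (hfc : ContinuousOn f
      {μ : E → ℝ | (∀ e, 0 ≤ μ e ∧ μ e ≤ 1) ∧ ∑ e, μ e ≤ (Γ : ℝ)})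
    (hconc : ConcaveOn ℝ
      {μ : E → ℝ | (∀ e, 0 ≤ μ e ∧ μ e ≤ 1) ∧ ∑ e, μ e ≤ (Γ : ℝ)} f) :
    ∃ μstar : E → ℝ,
      ((∀ e, 0 ≤ μstar e ∧ μstar e ≤ 1) ∧ ∑ e, μstar e ≤ (Γ : ℝ)) ∧
      (∀ e, μstar e = 0 ∨ μstar e = 1) ∧
      ∀ μ : E → ℝ, ((∀ e, 0 ≤ μ e ∧ μ e ≤ 1) ∧ ∑ e, μ e ≤ (Γ : ℝ)) →
        f μstar ≤ f μ := by
  have hcomp : IsCompact {μ : E → ℝ | (∀ e, 0 ≤ μ e ∧ μ e ≤ 1) ∧ ∑ e, μ e ≤ (Γ : ℝ)} := by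
    have : {μ : E → ℝ | (∀ e, 0 ≤ μ e ∧ μ e ≤ 1) ∧ ∑ e, μ e ≤ (Γ : ℝ)} =
        Set.pi Set.univ (fun _ : E => Set.Icc (0 : ℝ) 1) ∩ {μ | ∑ e, μ e ≤ (Γ : ℝ)} := by
      ext μ; simp only [Set.mem_setOf_eq, Set.mem_inter_iff, Set.mem_pi, Set.mem_univ, Set.mem_Icc, true_imp_iff]
    rw [this]
    apply (isCompact_univ_pi (fun _ => isCompact_Icc)).inter_right
    exact isClosed_le (by fun_prop) continuous_const
  obtain ⟨m, hm, hmin⟩ := hcomp.exists_isMinOn ⟨0, by simp⟩ hfc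
  obtain ⟨ν, hν, hbin, hle⟩ := round_aux Γ f hconc _ m rfl hm
  exact ⟨ν, hν, hbin, fun μ hμ => hle.trans (hmin hμ)⟩
end

section
/- For every flow network and every budget Γ ∈ ℕ, let Ψ = { μ : E → {0,1} : μ_{e_ts} = 0, Σ_{e∈E} μ_e ≤ Γ } be the (nonempty, finite) set of feasible attacks, and define the adaptive value AV(x) = min_{μ ∈ Ψ} M(x, μ) for x ∈ X. Then the administrator's robust and adaptive maximum flow problem has an optimal solution: there exists x* ∈ X such that AV(x*) ≥ AV(x) for every x ∈ X. -/
attribute [local instance] Classical.propDecidable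

namespace FlowNetwork

variable (N : FlowNetwork)

/-- `Ψ`: the set of feasible attacks under budget `Γ`. -/
def Psi (Γ : ℕ) : Set (N.V × N.V → ℝ) :=
  {μ | (∀ e, μ e = 0 ∨ μ e = 1) ∧ (∀ e, e ∉ N.E → μ e = 0) ∧
    μ (N.t, N.s) = 0 ∧ ∑ e ∈ N.E, μ e ≤ (Γ : ℝ)}

/-- `AV(x) = min_{μ ∈ Ψ} M(x, μ)`: the adaptive value of the flow `x`. -/
noncomputable def AV (Γ : ℕ) (x : N.V × N.V → ℝ) : ℝ :=
  sInf ((fun μ => N.MVal x μ) '' N.Psi Γ)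

/-- Feasibility of `(y, z)` for the recourse LP. -/
def LP (x μ y z : N.V × N.V → ℝ) : Prop :=
    (∀ e ∈ N.E, 0 ≤ y e) ∧ (∀ e ∈ N.E, 0 ≤ z e) ∧
    (∀ v, v ≠ N.s → N.outSum y v ≤ N.inSum y v) ∧
    (∀ e ∈ N.E, e ∉ N.lambdaSigma μ → y e ≤ x e) ∧
    (∀ e ∈ N.E, e ∈ N.lambdaSigma μ → y e ≤ (1 - μ e) * N.U e) ∧
    (∀ e ∈ N.E, e ∈ N.lambdaSigma μ → y e - x e ≤ z e)

/-- Objective of the recourse LP. -/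
noncomputable def obj (x y z : N.V × N.V → ℝ) : ℝ :=
  y (N.t, N.s) - ∑ e ∈ N.E, N.p e * z e - ∑ e ∈ N.E, N.p e * x e

/-- A common upper bound. -/
noncomputable def bnd : ℝ := ∑ e, N.U e

/-- Set a function to zero outside the edge set. -/
noncomputable def trunc (x : N.V × N.V → ℝ) : N.V × N.V → ℝ :=
  fun e => if e ∈ N.E then x e else 0

lemma trunc_of_mem {x : N.V × N.V → ℝ} {e} (h : e ∈ N.E) : N.trunc x e = x e := by
  simp [trunc, h]

lemma inSum_trunc (x : N.V × N.V → ℝ) (v : N.V) : N.inSum (N.trunc x) v = N.inSum x v := by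
  unfold inSum
  refine Finset.sum_congr rfl fun e he => N.trunc_of_mem (Finset.mem_filter.1 he).1

lemma outSum_trunc (x : N.V × N.V → ℝ) (v : N.V) : N.outSum (N.trunc x) v = N.outSum x v := by
  unfold outSum
  refine Finset.sum_congr rfl fun e he => N.trunc_of_mem (Finset.mem_filter.1 he).1

lemma obj_trunc (x y z : N.V × N.V → ℝ) :
    N.obj (N.trunc x) (N.trunc y) (N.trunc z) = N.obj x y z := by
  unfold obj
  rw [N.trunc_of_mem N.ts_mem]
  congr 1
  · congr 1
    exact Finset.sum_congr rfl fun e he => by rw [N.trunc_of_mem he]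
  · exact Finset.sum_congr rfl fun e he => by rw [N.trunc_of_mem he]

lemma Feasible.trunc {x : N.V × N.V → ℝ} (h : N.Feasible x) : N.Feasible (N.trunc x) := by
  obtain ⟨h1, h2, h3⟩ := h
  refine ⟨fun e => ?_, fun v hv => ?_, fun e he hne => ?_⟩
  · unfold FlowNetwork.trunc; split_ifs
    · exact h1 e
    · exact le_rfl
  · rw [inSum_trunc, outSum_trunc]; exact h2 v hv
  · rw [N.trunc_of_mem he]; exact h3 e he hne

lemma LP.trunc {x μ y z : N.V × N.V → ℝ} (h : N.LP x μ y z) :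
    N.LP (N.trunc x) μ (N.trunc y) (N.trunc z) := by
  obtain ⟨h1, h2, h3, h4, h5, h6⟩ := h
  refine ⟨fun e he => ?_, fun e he => ?_, fun v hv => ?_, fun e he hl => ?_, fun e he hl => ?_,
    fun e he hl => ?_⟩
  · rw [N.trunc_of_mem he]; exact h1 e he
  · rw [N.trunc_of_mem he]; exact h2 e he
  · rw [inSum_trunc, outSum_trunc]; exact h3 v hv
  · rw [N.trunc_of_mem he, N.trunc_of_mem he]; exact h4 e he hl
  · rw [N.trunc_of_mem he]; exact h5 e he hl
  · rw [N.trunc_of_mem he, N.trunc_of_mem he, N.trunc_of_mem he]; exact h6 e he hl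

lemma bnd_nonneg : 0 ≤ N.bnd := Finset.sum_nonneg fun e _ => N.U_nonneg e

lemma U_le_bnd (e : N.V × N.V) : N.U e ≤ N.bnd :=
  Finset.single_le_sum (fun e _ => N.U_nonneg e) (Finset.mem_univ e)

lemma Feasible.le_bnd {x : N.V × N.V → ℝ} (h : N.Feasible x) {e} (he : e ∈ N.E) :
    x e ≤ N.bnd := by
  obtain ⟨h1, h2, h3⟩ := h
  by_cases hne : e = (N.t, N.s)
  · subst hne
    calc x (N.t, N.s) ≤ N.outSum x N.t :=
          Finset.single_le_sum (f := x) (fun e _ => h1 e) (by simp [N.ts_mem])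
      _ = N.inSum x N.t := (h2 _ N.s_ne_t.symm).symm
      _ ≤ ∑ e ∈ N.E.filter (fun e => e.2 = N.t), N.U e := by
          refine Finset.sum_le_sum fun e he => ?_
          rw [Finset.mem_filter] at he
          refine h3 e he.1 ?_
          rintro rfl
          exact N.s_ne_t he.2
      _ ≤ N.bnd := Finset.sum_le_sum_of_subset_of_nonneg (Finset.subset_univ _)
          fun e _ _ => N.U_nonneg e
  · exact (h3 e he hne).trans (N.U_le_bnd e)

lemma LP.le_bnd {x μ y z : N.V × N.V → ℝ} (hx : N.Feasible x) (hμ : ∀ e, μ e = 0 ∨ μ e = 1)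
    (h : N.LP x μ y z) {e} (he : e ∈ N.E) : y e ≤ N.bnd := by
  obtain ⟨h1, h2, h3, h4, h5, h6⟩ := h
  by_cases hl : e ∈ N.lambdaSigma μ
  · have := h5 e he hl
    have hU := N.U_le_bnd e
    have hb := N.bnd_nonneg
    rcases hμ e with h | h <;> rw [h] at this <;> linarith
  · exact (h4 e he hl).trans (hx.le_bnd N he)

lemma trunc_mem_Icc {x : N.V × N.V → ℝ} (h0 : ∀ e ∈ N.E, 0 ≤ x e) (h1 : ∀ e ∈ N.E, x e ≤ N.bnd) :
    N.trunc x ∈ Set.Icc (fun _ => (0 : ℝ)) (fun _ => N.bnd) := by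
  constructor <;> intro e <;> by_cases he : e ∈ N.E <;> simp [FlowNetwork.trunc, he]
  · exact h0 e he
  · exact h1 e he
  · exact N.bnd_nonneg

lemma bddAbove_MSet {x μ : N.V × N.V → ℝ} (hx : N.Feasible x) (hμ : ∀ e, μ e = 0 ∨ μ e = 1) :
    BddAbove (N.MSet x μ) := by
  refine ⟨N.bnd, ?_⟩
  rintro r ⟨y, z, h1, h2, h3, h4, h5, h6, rfl⟩
  have hy : y (N.t, N.s) ≤ N.bnd := LP.le_bnd N hx hμ ⟨h1, h2, h3, h4, h5, h6⟩ N.ts_mem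
  have a : 0 ≤ ∑ e ∈ N.E, N.p e * z e :=
    Finset.sum_nonneg fun e he => mul_nonneg (N.p_nonneg e) (h2 e he)
  have b : 0 ≤ ∑ e ∈ N.E, N.p e * x e :=
    Finset.sum_nonneg fun e he => mul_nonneg (N.p_nonneg e) (hx.1 e)
  linarith

lemma LP_zero {x μ : N.V × N.V → ℝ} (hx : ∀ e, 0 ≤ x e) (hμ : ∀ e, μ e = 0 ∨ μ e = 1) :
    N.LP x μ (fun _ => 0) (fun _ => 0) := by
  refine ⟨fun _ _ => le_rfl, fun _ _ => le_rfl, fun v _ => by simp [inSum, outSum],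
    fun e _ _ => hx e, fun e _ _ => ?_, fun e _ _ => by simpa using hx e⟩
  have := N.U_nonneg e
  rcases hμ e with h | h <;> simp [h, this]

lemma mem_MSet {x μ : N.V × N.V → ℝ} {r : ℝ} :
    r ∈ N.MSet x μ ↔ ∃ y z, N.LP x μ y z ∧ r = N.obj x y z := by
  simp only [MSet, LP, obj, Set.mem_setOf_eq, and_assoc]

lemma LP.cap {x μ y z : N.V × N.V → ℝ} (hx : N.Feasible x) (hμ : ∀ e, μ e = 0 ∨ μ e = 1)
    (h : N.LP x μ y z) : N.LP x μ y (fun e => min (z e) N.bnd) := by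
  have hb := fun e (he : e ∈ N.E) => LP.le_bnd N hx hμ h he
  obtain ⟨h1, h2, h3, h4, h5, h6⟩ := h
  refine ⟨h1, fun e he => le_min (h2 e he) N.bnd_nonneg, h3, h4, h5, fun e he hl =>
    le_min (h6 e he hl) ?_⟩
  have := hb e he
  have := hx.1 e
  linarith

lemma obj_cap (x y z : N.V × N.V → ℝ) :
    N.obj x y z ≤ N.obj x y (fun e => min (z e) N.bnd) := by
  unfold obj
  have : ∑ e ∈ N.E, N.p e * min (z e) N.bnd ≤ ∑ e ∈ N.E, N.p e * z e :=
    Finset.sum_le_sum fun e _ => mul_le_mul_of_nonneg_left (min_le_left _ _) (N.p_nonneg e)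
  linarith

lemma continuous_inSum (v : N.V) : Continuous (fun y => N.inSum y v) := by
  unfold inSum; fun_prop

lemma continuous_outSum (v : N.V) : Continuous (fun y => N.outSum y v) := by
  unfold outSum; fun_prop

lemma isClosed_Feasible : IsClosed {x | N.Feasible x} := by
  unfold Feasible
  simp only [Set.setOf_and, Set.setOf_forall]
  refine IsClosed.inter ?_ (IsClosed.inter ?_ ?_)
  · exact isClosed_iInter fun e => isClosed_le (by fun_prop) (by fun_prop)
  · exact isClosed_iInter fun v => isClosed_iInter fun _ =>
      isClosed_eq (N.continuous_inSum v) (N.continuous_outSum v)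
  · exact isClosed_iInter fun e => isClosed_iInter fun _ => isClosed_iInter fun _ =>
      isClosed_le (by fun_prop) (by fun_prop)

lemma isClosed_LP (μ : N.V × N.V → ℝ) :
    IsClosed {q : (N.V × N.V → ℝ) × (N.V × N.V → ℝ) × (N.V × N.V → ℝ) |
      N.LP q.1 μ q.2.1 q.2.2} := by
  unfold LP
  simp only [Set.setOf_and, Set.setOf_forall]
  refine IsClosed.inter ?_ (IsClosed.inter ?_ (IsClosed.inter ?_ (IsClosed.inter ?_
    (IsClosed.inter ?_ ?_))))
  · exact isClosed_iInter fun e => isClosed_iInter fun _ =>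
      isClosed_le (by fun_prop) (by fun_prop)
  · exact isClosed_iInter fun e => isClosed_iInter fun _ =>
      isClosed_le (by fun_prop) (by fun_prop)
  · exact isClosed_iInter fun v => isClosed_iInter fun _ =>
      isClosed_le ((N.continuous_outSum v).comp (by fun_prop))
        ((N.continuous_inSum v).comp (by fun_prop))
  all_goals
    exact isClosed_iInter fun e => isClosed_iInter fun _ => isClosed_iInter fun _ =>
      isClosed_le (by fun_prop) (by fun_prop)

lemma continuous_obj :
    Continuous (fun q : (N.V × N.V → ℝ) × (N.V × N.V → ℝ) × (N.V × N.V → ℝ) =>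
      N.obj q.1 q.2.1 q.2.2) := by
  unfold obj; fun_prop

lemma finite_Psi (Γ : ℕ) : (N.Psi Γ).Finite := by
  refine (Set.Finite.pi' (t := fun _ : N.V × N.V => ({0, 1} : Set ℝ))
    fun _ => Set.toFinite _).subset ?_
  intro μ hμ e
  simpa using hμ.1 e

lemma zero_mem_Psi (Γ : ℕ) : (fun _ => 0) ∈ N.Psi Γ :=
  ⟨fun _ => Or.inl rfl, fun _ _ => rfl, rfl, by simp⟩

/-- The administrator's robust and adaptive maximum flow problem has an optimal
solution: some feasible flow maximizes the adaptive value `AV`. -/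
theorem exists_robust_adaptive_optimal_flow (N : FlowNetwork) (Γ : ℕ) :
    ∃ xstar, N.Feasible xstar ∧ ∀ x, N.Feasible x → N.AV Γ x ≤ N.AV Γ xstar := by
  have : Finite (N.Psi Γ) := (N.finite_Psi Γ).to_subtype
  have : Fintype (N.Psi Γ) := Fintype.ofFinite _
  have hne : (Finset.univ : Finset (N.Psi Γ)).Nonempty := ⟨⟨_, N.zero_mem_Psi Γ⟩, Finset.mem_univ _⟩
  let W := N.V × N.V → ℝ
  let F : W × (N.Psi Γ → W × W) → ℝ := fun q =>
    Finset.univ.inf' hne fun μ => N.obj q.1 (q.2 μ).1 (q.2 μ).2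
  have hF : Continuous F := by
    refine Continuous.finset_inf'_apply hne fun μ _ => ?_
    exact N.continuous_obj.comp
      (f := fun q : W × (N.Psi Γ → W × W) => (q.1, (q.2 μ).1, (q.2 μ).2)) (by fun_prop)
  let lo : W := fun _ => 0
  let hi : W := fun _ => N.bnd
  let C : Set (W × (N.Psi Γ → W × W)) := {q | N.Feasible q.1} ∩
    {q | ∀ μ, N.LP q.1 μ.1 (q.2 μ).1 (q.2 μ).2}
  have hC : IsClosed C := by
    refine (N.isClosed_Feasible.preimage continuous_fst).inter ?_
    rw [Set.setOf_forall]
    refine isClosed_iInter fun μ => ?_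
    exact (N.isClosed_LP μ.1).preimage
      (f := fun q : W × (N.Psi Γ → W × W) => (q.1, (q.2 μ).1, (q.2 μ).2)) (by fun_prop)
  let B : Set (W × (N.Psi Γ → W × W)) :=
    Set.Icc lo hi ×ˢ Set.pi Set.univ fun _ => Set.Icc lo hi ×ˢ Set.Icc lo hi
  have hB : IsCompact B :=
    isCompact_Icc.prod (isCompact_univ_pi fun _ => isCompact_Icc.prod isCompact_Icc)
  have hK : IsCompact (B ∩ C) := hB.inter_right hC
  -- every feasible flow with recourse decisions yields a point of the compact set
  have key : ∀ x, N.Feasible x → ∀ y z : N.Psi Γ → W, (∀ μ, N.LP x μ.1 (y μ) (z μ)) →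
      ∃ q ∈ B ∩ C, ∀ μ, N.obj x (y μ) (z μ) ≤ N.obj q.1 (q.2 μ).1 (q.2 μ).2 := by
    intro x hx y z h
    have h' := fun μ => LP.cap N hx μ.2.1 (h μ)
    refine ⟨(N.trunc x, fun μ => (N.trunc (y μ), N.trunc fun e => min (z μ e) N.bnd)),
      ⟨⟨?_, fun μ _ => ⟨?_, ?_⟩⟩, hx.trunc N, fun μ => LP.trunc N (h' μ)⟩, fun μ => ?_⟩
    · exact N.trunc_mem_Icc (fun e _ => hx.1 e) fun e he => hx.le_bnd N he
    · exact N.trunc_mem_Icc (h μ).1 fun e he => LP.le_bnd N hx μ.2.1 (h μ) he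
    · exact N.trunc_mem_Icc (h' μ).2.1 fun e he => min_le_right _ _
    · simp only [obj_trunc]
      exact N.obj_cap _ _ _
  have h0 : N.Feasible (fun _ => 0) :=
    ⟨fun _ => le_rfl, fun v _ => by simp [inSum, outSum], fun e _ _ => N.U_nonneg e⟩
  have hKne : (B ∩ C).Nonempty := by
    obtain ⟨q, hq, -⟩ := key _ h0 (fun _ _ => 0) (fun _ _ => 0)
      fun μ => N.LP_zero (fun _ => le_rfl) μ.2.1
    exact ⟨q, hq⟩
  obtain ⟨qs, hqs, hmax⟩ := hK.exists_isMaxOn hKne hF.continuousOn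
  refine ⟨qs.1, hqs.2.1, fun x hx => ?_⟩
  have hstar : F qs ≤ N.AV Γ qs.1 := by
    refine le_csInf ⟨_, _, N.zero_mem_Psi Γ, rfl⟩ ?_
    rintro _ ⟨μ, hμ, rfl⟩
    refine (Finset.inf'_le _ (Finset.mem_univ (⟨μ, hμ⟩ : N.Psi Γ))).trans ?_
    exact le_csSup (N.bddAbove_MSet hqs.2.1 hμ.1)
      (N.mem_MSet.2 ⟨_, _, hqs.2.2 ⟨μ, hμ⟩, rfl⟩)
  refine le_of_forall_pos_le_add fun ε hε => ?_
  have hex : ∀ μ : N.Psi Γ, ∃ y z : W, N.LP x μ.1 y z ∧ N.MVal x μ.1 - ε < N.obj x y z := by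
    intro μ
    have hn : (N.MSet x μ.1).Nonempty := ⟨_, N.mem_MSet.2 ⟨_, _, N.LP_zero hx.1 μ.2.1, rfl⟩⟩
    obtain ⟨r, hr, hlt⟩ := exists_lt_of_lt_csSup hn (sub_lt_self (N.MVal x μ.1) hε)
    obtain ⟨y, z, h, rfl⟩ := N.mem_MSet.1 hr
    exact ⟨y, z, h, hlt⟩
  choose y z hyz hlt using hex
  obtain ⟨q, hq, hle⟩ := key x hx y z hyz
  have h1 : N.AV Γ x - ε ≤ F q := by
    refine Finset.le_inf' _ _ fun μ _ => ?_
    have : N.AV Γ x ≤ N.MVal x μ.1 :=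
      csInf_le ((N.finite_Psi Γ).image _).bddBelow ⟨μ.1, μ.2, rfl⟩
    linarith [hlt μ, hle μ]
  have h2 : F q ≤ F qs := hmax hq
  linarith

end FlowNetwork
end
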